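/- (Finite-dimensional duality for the generalized robustness of states) Let F be a nonempty compact convex set of d×d density matrices that contains a positive definite density matrix, and let ρ be a d×d density matrix. Then 1 + R_F(ρ) = sup { Re(tr(Y·ρ)) : Y a d×d positive semidefinite matrix such that Re(tr(Y·σ)) ≤ 1 for all σ ∈ F }, and in particular R_F(ρ) < ∞. -/

import Mathlib

/-!
Absorbing `t • τ` into the Loewner order, `t` is feasible exactly when `ρ ≤ (1 + t) σ` for some
`σ ∈ F`. Weak duality is then monotonicity of `A ↦ Re tr (Y A)` for `Y ≥ 0`
(`re_trace_mul_nonneg`), and the positive definite element of `F` provides a feasible `t`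
(`exists_scale_sub_posSemidef`), so that both sides are finite.

For strong duality, the set `{A | A ≤ σ for some σ ∈ F}` is the difference of the compact
convex set `F` and the closed convex cone of positive semidefinite matrices, hence closed and
convex. If `ρ / c` lies outside it, the Hahn–Banach theorem separates the two by a functional,
which on Hermitian matrices has the form `A ↦ Re tr (Y A)` with `Y` Hermitian
(`exists_hermitian_repr`). Being bounded above on a set that is stable under subtracting positive
semidefinite matrices, the functional is nonnegative on the cone, so `Y ≥ 0`. After rescaling,
`Y` is a dual witness of value greater than `c` (`exists_witness`). Hence every `c` above the
dual value is primal feasible.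
-/

open scoped ENNReal NNReal ComplexOrder

/-- A density matrix: a positive semidefinite complex matrix of trace one. -/
def IsDensity {d : ℕ} (ρ : Matrix (Fin d) (Fin d) ℂ) : Prop :=
  ρ.PosSemidef ∧ ρ.trace = 1

/-- The generalized robustness of a state `ρ` w.r.t. a free set `F`:
the infimum of those `t ≥ 0` for which there are a density matrix `τ` and `σ ∈ F`
with `ρ + t • τ = (1 + t) • σ`, with `inf ∅ = ∞`. -/
noncomputable def Rgen {d : ℕ} (F : Set (Matrix (Fin d) (Fin d) ℂ))
    (ρ : Matrix (Fin d) (Fin d) ℂ) : ℝ≥0∞ :=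
  ⨅ t ∈ {t : ℝ≥0 | ∃ τ, IsDensity τ ∧
      ∃ σ ∈ F, ρ + (t : ℝ) • τ = ((1 : ℝ) + (t : ℝ)) • σ}, (t : ℝ≥0∞)

open Matrix in
lemma re_trace_mul_nonneg {d : ℕ} {A B : Matrix (Fin d) (Fin d) ℂ}
    (hA : A.PosSemidef) (hB : B.PosSemidef) : 0 ≤ ((A * B).trace).re := by
  classical
  obtain ⟨C, rfl⟩ : ∃ C, B = Cᴴ * C := by
    open scoped MatrixOrder in
    exact CStarAlgebra.nonneg_iff_eq_star_mul_self.mp hB.nonneg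
  have h : (A * (Cᴴ * C)).trace = (C * A * Cᴴ).trace := by
    rw [← Matrix.mul_assoc, Matrix.trace_mul_comm, ← Matrix.mul_assoc]
  rw [h]
  exact (Complex.nonneg_iff.mp (hA.mul_mul_conjTranspose_same C).trace_nonneg).1

/-- A positive semidefinite matrix is dominated by a multiple of any positive definite one:
`ρ ≤ ‖ρ‖ • 1` and `r • 1 ≤ σ` for some `r > 0`. -/
lemma exists_scale_sub_posSemidef {d : ℕ} {σ ρ : Matrix (Fin d) (Fin d) ℂ}
    (hσ : σ.PosDef) (hρ : ρ.PosSemidef) : ∃ c : ℝ, (c • σ - ρ).PosSemidef := by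
  open scoped Matrix.Norms.L2Operator MatrixOrder in
  rcases subsingleton_or_nontrivial (Matrix (Fin d) (Fin d) ℂ) with h | h
  · exact ⟨0, by rw [Subsingleton.elim ((0 : ℝ) • σ - ρ) 0]; exact .zero⟩
  have h1 : IsStrictlyPositive σ := hσ.isStrictlyPositive
  obtain ⟨r, hr, hrσ⟩ : ∃ r > 0, (algebraMap ℝ (Matrix (Fin d) (Fin d) ℂ)) r ≤ σ :=
    (CFC.exists_pos_algebraMap_le_iff h1.isSelfAdjoint).2 fun x hx ↦ h1.spectrum_pos hx
  have hρ2 : ρ ≤ algebraMap ℝ _ ‖ρ‖ :=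
    IsSelfAdjoint.le_algebraMap_norm_self (a := ρ) hρ.isHermitian
  refine ⟨‖ρ‖ / r, ?_⟩
  have e : (‖ρ‖ / r) • σ - ρ = (‖ρ‖ / r) • (σ - algebraMap ℝ _ r) + (algebraMap ℝ _ ‖ρ‖ - ρ) := by
    rw [smul_sub, Algebra.algebraMap_eq_smul_one, Algebra.algebraMap_eq_smul_one, smul_smul,
      div_mul_cancel₀ _ hr.ne']
    abel
  rw [e]
  exact ((Matrix.le_iff.mp hrσ).smul (by positivity)).add (Matrix.le_iff.mp hρ2)

lemma isClosed_posSemidef (d : ℕ) : IsClosed {A : Matrix (Fin d) (Fin d) ℂ | A.PosSemidef} := by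
  have : {A : Matrix (Fin d) (Fin d) ℂ | A.PosSemidef} =
      {A | A.conjTranspose = A} ∩ ⋂ x : Fin d → ℂ, {A | 0 ≤ star x ⬝ᵥ A.mulVec x} := by
    ext A
    simp only [Set.mem_ofPred_eq, Set.mem_inter_iff, Set.mem_iInter]
    exact ⟨fun h => ⟨h.1, h.dotProduct_mulVec_nonneg⟩, fun h => .of_dotProduct_mulVec_nonneg h.1 h.2⟩
  rw [this]
  refine (isClosed_eq (by fun_prop) (by fun_prop)).inter (isClosed_iInter fun x => ?_)
  exact isClosed_le continuous_const (by fun_prop)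

open Matrix in
/-- On Hermitian matrices, the real part of a complex linear functional is the pairing with a
Hermitian matrix. If `tr (Z · )` represents the functional, `(Z + Zᴴ) / 2` is such a matrix. -/
lemma exists_hermitian_repr {d : ℕ} (g : Matrix (Fin d) (Fin d) ℂ →ₗ[ℂ] ℂ) :
    ∃ Y : Matrix (Fin d) (Fin d) ℂ, Y.IsHermitian ∧
      ∀ A : Matrix (Fin d) (Fin d) ℂ, A.IsHermitian → ((Y * A).trace).re = (g A).re := by
  let Z : Matrix (Fin d) (Fin d) ℂ := .of fun i j => g (Matrix.single j i 1)
  have hZ (A : Matrix (Fin d) (Fin d) ℂ) : (Z * A).trace = g A := by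
    conv_rhs => rw [Matrix.matrix_eq_sum_single A]
    simp only [map_sum, Matrix.trace, Matrix.diag, Matrix.mul_apply]
    rw [Finset.sum_comm]
    refine Finset.sum_congr rfl fun i _ => Finset.sum_congr rfl fun j _ => ?_
    have : Matrix.single i j (A i j) = A i j • Matrix.single i j (1 : ℂ) := by
      simp [Matrix.smul_single]
    rw [this, map_smul, smul_eq_mul, mul_comm]
    rfl
  refine ⟨(1 / 2 : ℝ) • (Z + Zᴴ), ?_, fun A hA => ?_⟩
  · rw [Matrix.IsHermitian, conjTranspose_smul, conjTranspose_add, conjTranspose_conjTranspose,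
      add_comm, star_trivial]
  · have h : (Zᴴ * A).trace = star (Z * A).trace := by
      rw [← trace_conjTranspose, conjTranspose_mul, hA.eq, trace_mul_comm]
    rw [smul_mul_assoc, trace_smul, add_mul, trace_add, h, hZ]
    simp
    ring

open Matrix Pointwise in
/-- If `ρ ≤ c σ` holds for no `σ ∈ F`, then some dual witness has value greater than `c`. -/
lemma exists_witness {d : ℕ} {F : Set (Matrix (Fin d) (Fin d) ℂ)}
    (hne : F.Nonempty) (hcomp : IsCompact F) (hconv : Convex ℝ F)
    (hF : ∀ σ ∈ F, σ.PosSemidef) {ρ : Matrix (Fin d) (Fin d) ℂ} (hρ : ρ.PosSemidef)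
    {c : ℝ} (hc : 0 < c) (h : ∀ σ ∈ F, ¬ (c • σ - ρ).PosSemidef) :
    ∃ Y : Matrix (Fin d) (Fin d) ℂ, Y.PosSemidef ∧
      (∀ σ ∈ F, ((Y * σ).trace).re ≤ 1) ∧ c < ((Y * ρ).trace).re := by
  let P : Set (Matrix (Fin d) (Fin d) ℂ) := {A | A.PosSemidef}
  have hP : Convex ℝ P := fun A hA B hB a b ha hb _ =>
    Matrix.PosSemidef.add (hA.smul ha) (hB.smul hb)
  have hK : IsClosed (F + -P) := (isClosed_posSemidef d).neg.add_left_of_isCompact hcomp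
  have hKc : Convex ℝ (F + -P) := hconv.add hP.neg
  have hnot : c⁻¹ • ρ ∉ F + -P := by
    rintro ⟨σ, hσ, N, hN, e⟩
    refine h σ hσ ?_
    have e2 : c • σ - ρ = c • (-N) := by
      have : ρ = c • (σ + N) := by
        rw [show σ + N = c⁻¹ • ρ from e, smul_smul, mul_inv_cancel₀ hc.ne', one_smul]
      rw [this, smul_add, smul_neg]; abel
    rw [e2]
    exact Matrix.PosSemidef.smul hN hc.le
  have : LocallyConvexSpace ℝ (Matrix (Fin d) (Fin d) ℂ) := by
    let := Matrix.normedAddCommGroup (m := Fin d) (n := Fin d) (α := ℂ)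
    let : NormedSpace ℝ (Matrix (Fin d) (Fin d) ℂ) := Matrix.normedSpace
    exact NormedSpace.toLocallyConvexSpace
  obtain ⟨g, u, hg, hgu⟩ := RCLike.geometric_hahn_banach_closed_point (𝕜 := ℂ) hKc hK hnot
  obtain ⟨Y, hY, hYg⟩ := exists_hermitian_repr g.toLinearMap
  simp only [ContinuousLinearMap.coe_coe] at hYg
  simp only [RCLike.re_to_complex] at hg hgu
  have hK1 (σ) (hσ : σ ∈ F) (A : Matrix (Fin d) (Fin d) ℂ) (hA : A.PosSemidef) :
      (g σ).re - (g A).re < u := by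
    have := hg (σ + -A) ⟨σ, hσ, -A, by simpa [P] using hA, rfl⟩
    simpa [sub_eq_add_neg] using this
  obtain ⟨σ₀, hσ₀⟩ := hne
  have hpos (A : Matrix (Fin d) (Fin d) ℂ) (hA : A.PosSemidef) : 0 ≤ (g A).re := by
    -- otherwise `(g (σ₀ - n A)).re` would be unbounded above as `n` grows
    by_contra! hlt
    obtain ⟨n, hn⟩ := exists_nat_gt ((u - (g σ₀).re) / -(g A).re)
    rw [div_lt_iff₀ (by linarith)] at hn
    have := hK1 σ₀ hσ₀ ((n : ℝ) • A) (hA.smul n.cast_nonneg)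
    rw [show (g ((n : ℝ) • A)).re = n * (g A).re by
      rw [← Complex.coe_smul, map_smul]; simp] at this
    linarith
  have hYpos : Y.PosSemidef := by
    refine .of_dotProduct_mulVec_nonneg hY fun x => ?_
    have hA := Matrix.posSemidef_vecMulVec_self_star x
    have e : star x ⬝ᵥ Y *ᵥ x = (Y * vecMulVec x (star x)).trace := by
      rw [Matrix.mul_vecMulVec, Matrix.trace_vecMulVec, dotProduct_comm]
    rw [Complex.nonneg_iff]
    constructor
    · rw [e, hYg _ hA.1]
      exact hpos _ hA
    · have := hY.im_star_dotProduct_mulVec_self x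
      simpa using this.symm
  have hu : 0 < u := by
    have := hK1 σ₀ hσ₀ 0 .zero
    have h2 := hpos σ₀ (hF _ hσ₀)
    simp at this
    linarith
  refine ⟨u⁻¹ • Y, hYpos.smul (by positivity), fun σ hσ => ?_, ?_⟩
  · have := hK1 σ hσ 0 .zero
    rw [smul_mul_assoc, trace_smul, Complex.smul_re, hYg σ (hF σ hσ).1, smul_eq_mul,
      inv_mul_le_iff₀ hu]
    simp at this
    linarith
  · rw [← Complex.coe_smul, map_smul] at hgu
    rw [smul_mul_assoc, trace_smul, Complex.smul_re, hYg ρ hρ.1, smul_eq_mul, lt_inv_mul_iff₀ hu]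
    have h3 : u < c⁻¹ * (g ρ).re := by simpa using hgu
    rw [lt_inv_mul_iff₀ hc] at h3
    linarith

/-- If `ρ ≤ (1 + t) σ`, then `t` is feasible for the robustness: normalize `(1 + t) σ - ρ`, whose
trace is `t`. When `t = 0` the difference vanishes and any density matrix, such as `ρ`, serves
as `τ`. -/
lemma exists_density_of_le {d : ℕ} {σ ρ : Matrix (Fin d) (Fin d) ℂ} (hσ : IsDensity σ)
    (hρ : IsDensity ρ) {t : ℝ} (ht : 0 ≤ t) (h : (((1 : ℝ) + t) • σ - ρ).PosSemidef) :
    ∃ τ, IsDensity τ ∧ ρ + t • τ = ((1 : ℝ) + t) • σ := by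
  have htr : (((1 : ℝ) + t) • σ - ρ).trace = t := by
    rw [Matrix.trace_sub, Matrix.trace_smul, hσ.2, hρ.2]
    simp
  rcases ht.eq_or_lt with rfl | ht
  · refine ⟨ρ, hρ, ?_⟩
    have := h.trace_eq_zero_iff.mp (by simpa using htr)
    rw [sub_eq_zero.mp this]
    simp
  · refine ⟨t⁻¹ • (((1 : ℝ) + t) • σ - ρ), ⟨h.smul (by positivity), ?_⟩, ?_⟩
    · rw [Matrix.trace_smul, htr, Complex.real_smul, ← Complex.ofReal_mul,
        inv_mul_cancel₀ ht.ne', Complex.ofReal_one]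
    · rw [smul_smul, mul_inv_cancel₀ ht.ne', one_smul]
      abel

/-- Weak duality. -/
lemma re_trace_le_of_feasible {d : ℕ} {F : Set (Matrix (Fin d) (Fin d) ℂ)}
    {σ ρ Y : Matrix (Fin d) (Fin d) ℂ} (hσ : σ ∈ F) {c : ℝ} (hc : 0 ≤ c)
    (h : (c • σ - ρ).PosSemidef) (hY : Y.PosSemidef)
    (hYF : ∀ σ ∈ F, ((Y * σ).trace).re ≤ 1) : ((Y * ρ).trace).re ≤ c := by
  have h1 := re_trace_mul_nonneg hY h
  rw [mul_sub, Matrix.trace_sub, mul_smul_comm, Matrix.trace_smul, Complex.sub_re,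
    Complex.smul_re, smul_eq_mul] at h1
  nlinarith [hYF σ hσ]

/-- Finite-dimensional duality for the generalized robustness of states:
the robustness is finite and `1 + R_F(ρ)` equals the optimal value of the dual
program over witnesses `Y ≥ 0` with `Re tr(Y σ) ≤ 1` on `F`. -/
theorem rgen_duality {d : ℕ} (F : Set (Matrix (Fin d) (Fin d) ℂ))
    (hne : F.Nonempty) (hcomp : IsCompact F) (hconv : Convex ℝ F)
    (hFd : ∀ σ ∈ F, IsDensity σ) (hpd : ∃ σ ∈ F, σ.PosDef)
    (ρ : Matrix (Fin d) (Fin d) ℂ) (hρ : IsDensity ρ) :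
    Rgen F ρ ≠ ⊤ ∧
      1 + (Rgen F ρ).toReal =
        sSup {x : ℝ | ∃ Y : Matrix (Fin d) (Fin d) ℂ, Y.PosSemidef ∧
          (∀ σ ∈ F, ((Y * σ).trace).re ≤ 1) ∧ x = ((Y * ρ).trace).re} := by
  set S := {x : ℝ | ∃ Y : Matrix (Fin d) (Fin d) ℂ, Y.PosSemidef ∧
          (∀ σ ∈ F, ((Y * σ).trace).re ≤ 1) ∧ x = ((Y * ρ).trace).re} with hS
  have hle (t : ℝ) (ht : 0 ≤ t) (σ) (hσ : σ ∈ F) (h : (((1 : ℝ) + t) • σ - ρ).PosSemidef) :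
      Rgen F ρ ≤ ENNReal.ofReal t := by
    obtain ⟨τ, hτ, e⟩ := exists_density_of_le (hFd σ hσ) hρ ht h
    exact iInf₂_le (⟨t, ht⟩ : ℝ≥0) ⟨τ, hτ, σ, hσ, e⟩ |>.trans_eq
      (by rw [ENNReal.ofReal, Real.toNNReal_of_nonneg ht]; rfl)
  have hone : (1 : ℝ) ∈ S :=
    ⟨1, .one, fun σ hσ => by simp [(hFd σ hσ).2], by simp [hρ.2]⟩
  obtain ⟨σ₁, hσ₁, hpd⟩ := hpd
  obtain ⟨c, hc⟩ := exists_scale_sub_posSemidef hpd hρ.1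
  have hc1 : 1 ≤ c := by
    have h := (Complex.nonneg_iff.mp hc.trace_nonneg).1
    rw [Matrix.trace_sub, Matrix.trace_smul, (hFd _ hσ₁).2, hρ.2] at h
    simpa using h
  have hfin : Rgen F ρ ≠ ⊤ := by
    refine ne_top_of_le_ne_top ENNReal.ofReal_ne_top (hle (c - 1) (by linarith) σ₁ hσ₁ ?_)
    simpa using hc
  have hbdd : BddAbove S := ⟨c, by
    rintro x ⟨Y, hY, hYF, rfl⟩
    exact re_trace_le_of_feasible hσ₁ (by linarith) hc hY hYF⟩
  have hS1 : 1 ≤ sSup S := le_csSup hbdd hone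
  refine ⟨hfin, le_antisymm ?_ ?_⟩
  · refine le_of_forall_pos_le_add fun ε hε => ?_
    have hex : ∃ σ ∈ F, (((1 : ℝ) + (sSup S + ε - 1)) • σ - ρ).PosSemidef := by
      by_contra! hcon
      obtain ⟨Y, hY, hYF, hlt⟩ := exists_witness hne hcomp hconv (fun σ hσ => (hFd σ hσ).1) hρ.1
        (by linarith) hcon
      have := le_csSup hbdd (show _ ∈ S from ⟨Y, hY, hYF, rfl⟩)
      linarith
    obtain ⟨σ, hσ, h⟩ := hex
    have h2 := ENNReal.toReal_mono ENNReal.ofReal_ne_top (hle _ (by linarith) σ hσ h)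
    rw [ENNReal.toReal_ofReal (by linarith)] at h2
    linarith
  · refine csSup_le ⟨1, hone⟩ ?_
    rintro x ⟨Y, hY, hYF, rfl⟩
    have key : ENNReal.ofReal (((Y * ρ).trace).re - 1) ≤ Rgen F ρ := by
      refine le_iInf₂ fun t ⟨τ, hτ, σ, hσ, e⟩ => ?_
      rw [← ENNReal.ofReal_coe_nnreal]
      refine ENNReal.ofReal_le_ofReal ?_
      have h1 : (((1 : ℝ) + t) • σ - ρ).PosSemidef := by
        rw [← e, add_sub_cancel_left]
        exact hτ.1.smul t.2
      have := re_trace_le_of_feasible hσ (by positivity) h1 hY hYF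
      linarith
    have := (ENNReal.ofReal_le_iff_le_toReal hfin).mp key
    linarith
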